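/- arXiv:2402.01943 — 4 statements merged into one kernel-verified Lean document; each statement's English description precedes it below -/
import Mathlib

section
/- Let T be a finite rooted tree and let π : V → {0,1,…,|V|−1} be a bijection. Then π satisfies both the Level Constraint and the Precedence Constraint if and only if for every vertex p, the image π(D(p) ∪ {p}) equals the integer interval {π(p), π(p)+1, …, π(p)+|D(p)|} (i.e., each vertex together with its strict descendants occupies a contiguous block of positions whose minimum is the position of that vertex). -/
/-!
A block `B = D(p) ∪ {p}` has `|D(p)| + 1` elements, and so does its image, as `π` is injective.
Precedence puts the image above `π(p)`, and the level bound for the pairs `(i, p)` puts it below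
`π(p) + |D(p)|`; an interval with `|D(p)| + 1` elements is then filled by counting
(`Set.eq_of_subset_of_ncard_le`). Conversely, two points of an interval of length `|D(p)|` are
at most `|D(p)|` apart, and injectivity makes the inequality `π(p) ≤ π(i)` strict for `i ≠ p`.
-/

/-- A finite rooted tree on a vertex type `V`: a distinguished root and a parent
function (with the convention `parent root = root`), such that iterating the
parent function from any vertex eventually reaches the root (hence the ancestor
relation is well-founded). -/
structure RTree (V : Type*) where
  root : V
  parent : V → V
  parent_root : parent root = root
  reaches_root : ∀ v : V, ∃ n : ℕ, parent^[n] v = root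

namespace RTree

variable {V : Type*}

/-- `T.desc p` is the set of strict descendants of `p`: the vertices `v ≠ p`
from which `p` is obtained by iterating the parent function. -/
def desc (T : RTree V) (p : V) : Set V :=
  {v | v ≠ p ∧ ∃ n : ℕ, T.parent^[n] v = p}

/-- `T.children p` is the set of children of `p`. -/
def children (T : RTree V) (p : V) : Set V :=
  {v | v ≠ p ∧ T.parent v = p}

/-- The Level Constraint: for every vertex `p` and all `i, j ∈ D(p) ∪ {p}`,
`|π(i) − π(j)| ≤ |D(p)|`. -/
def LevelConstraint (T : RTree V) (π : V → ℕ) : Prop :=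
  ∀ p : V, ∀ i ∈ insert p (T.desc p), ∀ j ∈ insert p (T.desc p),
    |(π i : ℤ) - (π j : ℤ)| ≤ ((T.desc p).ncard : ℤ)

/-- The Precedence Constraint: for every vertex `p` and every `i ∈ D(p)`,
`π(p) < π(i)`. -/
def PrecedenceConstraint (T : RTree V) (π : V → ℕ) : Prop :=
  ∀ p : V, ∀ i ∈ T.desc p, π p < π i

end RTree

/-- A bijection `π : V → {0, …, |V|−1}` satisfies both the
Level Constraint and the Precedence Constraint if and only if for every vertex
`p`, the image `π(D(p) ∪ {p})` is exactly the integer interval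
`{π(p), π(p)+1, …, π(p)+|D(p)|}`. -/
theorem constraints_iff_blocks_are_intervals
    {V : Type*} [Fintype V] (T : RTree V) (π : V → ℕ)
    (hbij : Set.BijOn π Set.univ (Set.Iio (Fintype.card V))) :
    (T.LevelConstraint π ∧ T.PrecedenceConstraint π) ↔
      ∀ p : V, π '' insert p (T.desc p)
        = Set.Icc (π p) (π p + (T.desc p).ncard) := by
  have hinj : Function.Injective π := Set.injOn_univ.mp hbij.injOn
  constructor
  · rintro ⟨hL, hP⟩ p
    apply Set.eq_of_subset_of_ncard_le
    · rintro _ ⟨i, hi, rfl⟩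
      have h1 := abs_le.mp (hL p i hi p (Set.mem_insert _ _))
      have h2 : π p ≤ π i := by
        rcases hi with rfl | hi
        · exact le_rfl
        · exact (hP p i hi).le
      exact ⟨h2, by omega⟩
    · have hp : p ∉ T.desc p := fun h => h.1 rfl
      rw [Set.ncard_image_of_injective _ hinj,
        Set.ncard_insert_of_notMem hp (Set.toFinite _),
        Set.ncard_eq_toFinset_card', Set.toFinset_Icc, Nat.card_Icc]
      omega
    · exact Set.finite_Icc _ _
  · intro h
    have hmem : ∀ p, ∀ i ∈ insert p (T.desc p),
        π p ≤ π i ∧ π i ≤ π p + (T.desc p).ncard := fun p i hi =>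
      Set.mem_Icc.mp (h p ▸ Set.mem_image_of_mem π hi)
    refine ⟨fun p i hi j hj => ?_, fun p i hi => ?_⟩
    · have h1 := hmem p i hi
      have h2 := hmem p j hj
      rw [abs_le]
      omega
    · exact lt_of_le_of_ne (hmem p i (Set.mem_insert_of_mem _ hi)).1
        fun e => hi.1 (hinj e.symm)
end

section
/- Let T be a finite rooted tree with root r and let π : V → {0,1,…,|V|−1} be a bijection satisfying both the Level Constraint and the Precedence Constraint. For each child c of r, let π_c be the bijection from D(c) ∪ {c} onto {0,1,…,|D(c)|} obtained by relativizing π (i.e., π_c(v) is the number of vertices u ∈ D(c) ∪ {c} with π(u) < π(v)). Then π_c satisfies both the Level Constraint and the Precedence Constraint on the subtree of T rooted at c. -/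
namespace RTree

variable {V : Type*}

lemma parent_mem_of_desc (T : RTree V) {c v : V} (hv : v ∈ T.desc c) :
    T.parent v ∈ insert c (T.desc c) := by
  obtain ⟨hne, n, hn⟩ := hv
  match n, hn with
  | 0, hn => exact absurd hn hne
  | m + 1, hn =>
    rw [Function.iterate_succ_apply] at hn
    by_cases h : T.parent v = c
    · exact Set.mem_insert_iff.mpr (Or.inl h)
    · exact Set.mem_insert_iff.mpr (Or.inr ⟨h, m, hn⟩)

open Classical in
/-- The parent function of the subtree rooted at `c`, inherited from `T`. -/
noncomputable def subtreeParent (T : RTree V) (c : V)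
    (v : {v : V // v ∈ insert c (T.desc c)}) :
    {v : V // v ∈ insert c (T.desc c)} :=
  if h : v.1 = c then ⟨c, Set.mem_insert _ _⟩
  else ⟨T.parent v.1, T.parent_mem_of_desc ((Set.mem_insert_iff.mp v.2).resolve_left h)⟩

lemma subtree_reaches_aux (T : RTree V) (c : V) :
    ∀ (n : ℕ) (v : V) (hv : v ∈ insert c (T.desc c)), T.parent^[n] v = c →
      ∃ k : ℕ, (T.subtreeParent c)^[k] ⟨v, hv⟩ = ⟨c, Set.mem_insert _ _⟩ := by
  intro n
  induction n with
  | zero =>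
    intro v hv h
    simp only [Function.iterate_zero_apply] at h
    exact ⟨0, by simp only [Function.iterate_zero_apply]; exact Subtype.ext h⟩
  | succ n ih =>
    intro v hv h
    by_cases hvc : v = c
    · exact ⟨0, by simp only [Function.iterate_zero_apply]; exact Subtype.ext hvc⟩
    · have hvd : v ∈ T.desc c := (Set.mem_insert_iff.mp hv).resolve_left hvc
      have hp : T.parent v ∈ insert c (T.desc c) := T.parent_mem_of_desc hvd
      have h' : T.parent^[n] (T.parent v) = c := by
        rw [← Function.iterate_succ_apply]; exact h
      obtain ⟨k, hk⟩ := ih (T.parent v) hp h'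
      refine ⟨k + 1, ?_⟩
      rw [Function.iterate_succ_apply]
      have heq : T.subtreeParent c ⟨v, hv⟩ = ⟨T.parent v, hp⟩ := by
        simp [subtreeParent, hvc]
      rw [heq]
      exact hk

/-- The subtree of `T` rooted at `c`: the rooted tree on the vertex set
`D(c) ∪ {c}` with root `c` and the parent function inherited from `T`. -/
noncomputable def subtree (T : RTree V) (c : V) :
    RTree {v : V // v ∈ insert c (T.desc c)} where
  root := ⟨c, Set.mem_insert _ _⟩
  parent := T.subtreeParent c
  parent_root := by simp [subtreeParent]
  reaches_root := by
    rintro ⟨v, hv⟩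
    rcases Set.mem_insert_iff.mp hv with h | h
    · exact ⟨0, by simp only [Function.iterate_zero_apply]; exact Subtype.ext h⟩
    · obtain ⟨hne, n, hn⟩ := h
      exact T.subtree_reaches_aux c n v hv hn

end RTree

namespace RTree

/-- Descent in the subtree implies descent in `T`: each step of the subtree's parent map is a step
of `T.parent`, apart from the idle step at `c`. -/
lemma desc_of_subtree_desc {V : Type*} (T : RTree V) (c : V)
    (p v : {v : V // v ∈ insert c (T.desc c)}) (h : v ∈ (T.subtree c).desc p) :
    v.1 ∈ T.desc p.1 := by
  obtain ⟨hne, n, hn⟩ := h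
  refine ⟨fun h => hne (Subtype.ext h), ?_⟩
  clear hne
  induction n generalizing v with
  | zero => exact ⟨0, congrArg Subtype.val hn⟩
  | succ n ih =>
    rw [Function.iterate_succ_apply] at hn
    obtain ⟨k, hk⟩ := ih _ hn
    by_cases hvc : v.1 = c
    · have : (T.subtree c).parent v = v := by
        apply Subtype.ext
        simp [subtree, subtreeParent, hvc]
      rw [this] at hk
      exact ⟨k, hk⟩
    · have : ((T.subtree c).parent v).1 = T.parent v.1 := by
        simp [subtree, subtreeParent, hvc]
      rw [this] at hk
      exact ⟨k + 1, by rw [Function.iterate_succ_apply]; exact hk⟩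

/-- A path in `T` from `v` up to `p`, both in the subtree at `c`, stays in the subtree: it could
only leave through `c`, and then `c` and `p` would be strict descendants of each other, which the
Precedence Constraint excludes. -/
lemma exists_subtree_iterate {V : Type*} (T : RTree V) (π : V → ℕ)
    (hprec : T.PrecedenceConstraint π) (c : V) (p : {v : V // v ∈ insert c (T.desc c)}) (n : ℕ)
    (v : {v : V // v ∈ insert c (T.desc c)}) (hn : T.parent^[n] v.1 = p.1) :
    ∃ k : ℕ, (T.subtree c).parent^[k] v = p := by
  induction n generalizing v with
  | zero => exact ⟨0, Subtype.ext hn⟩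
  | succ n ih =>
    by_cases hvc : v.1 = c
    · by_cases hpc : p.1 = c
      · exact ⟨0, Subtype.ext (hvc.trans hpc.symm)⟩
      · have h1 : p.1 ∈ T.desc c := (Set.mem_insert_iff.mp p.2).resolve_left hpc
        have h2 : c ∈ T.desc p.1 := ⟨fun h => hpc h.symm, n + 1, by rw [← hn, hvc]⟩
        exact absurd (hprec _ _ h1) (hprec _ _ h2).asymm
    · have hpar : ((T.subtree c).parent v).1 = T.parent v.1 := by
        simp [subtree, subtreeParent, hvc]
      rw [Function.iterate_succ_apply, ← hpar] at hn
      obtain ⟨k, hk⟩ := ih _ hn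
      exact ⟨k + 1, by rw [Function.iterate_succ_apply]; exact hk⟩

lemma desc_subset_image_subtree_desc {V : Type*} (T : RTree V) (π : V → ℕ)
    (hprec : T.PrecedenceConstraint π) (c : V) (p : {v : V // v ∈ insert c (T.desc c)}) :
    T.desc p.1 ⊆ Subtype.val '' (T.subtree c).desc p := by
  rintro v ⟨hne, n, hn⟩
  have hv : v ∈ insert c (T.desc c) := by
    by_cases hvc : v = c
    · exact Set.mem_insert_iff.mpr (Or.inl hvc)
    · refine Set.mem_insert_iff.mpr (Or.inr ⟨hvc, ?_⟩)
      rcases Set.mem_insert_iff.mp p.2 with h | ⟨-, m, hm⟩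
      · exact ⟨n, hn.trans h⟩
      · exact ⟨m + n, by rw [Function.iterate_add_apply, hn, hm]⟩
  exact ⟨⟨v, hv⟩, ⟨fun h => hne (congrArg Subtype.val h),
    T.exists_subtree_iterate π hprec c p n ⟨v, hv⟩ hn⟩, rfl⟩

/-- Raising the threshold from `a` to `b` adds at most `b - a` elements to the count, because the
new ones inject into `[a, b)`. The subtraction is truncated, so for `b ≤ a` this is monotonicity. -/
lemma ncard_rank_lt_le {V : Type*} [Finite V] (π : V → ℕ) (hπ : Function.Injective π)
    (S : Set V) (a b : ℕ) :
    {u ∈ S | π u < b}.ncard ≤ {u ∈ S | π u < a}.ncard + (b - a) := by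
  have hsub : {u ∈ S | π u < b} ⊆ {u ∈ S | π u < a} ∪ π ⁻¹' Set.Ico a b := by
    rintro u ⟨hu, hb⟩
    rcases lt_or_ge (π u) a with h | h
    · exact Or.inl ⟨hu, h⟩
    · exact Or.inr ⟨h, hb⟩
  have hIco : (π ⁻¹' Set.Ico a b).ncard ≤ b - a := by
    rw [← Set.ncard_image_of_injective _ hπ]
    calc (π '' (π ⁻¹' Set.Ico a b)).ncard ≤ (Set.Ico a b).ncard :=
          Set.ncard_le_ncard (Set.image_preimage_subset _ _) (Set.finite_Ico a b)
      _ = b - a := by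
          rw [← Finset.coe_Ico, Set.ncard_coe_finset, Nat.card_Ico]
  have h1 := Set.ncard_le_ncard hsub (Set.toFinite _)
  have h2 := Set.ncard_union_le {u ∈ S | π u < a} (π ⁻¹' Set.Ico a b)
  omega

end RTree

/-- Let `π` be a bijection `V → {0, …, |V|−1}` satisfying the
Level and Precedence Constraints, and let `c` be a child of the root.  The
relativized ranking `π_c` on `D(c) ∪ {c}` — assigning to `v` the number of
vertices `u ∈ D(c) ∪ {c}` with `π(u) < π(v)` — satisfies both the Level
Constraint and the Precedence Constraint on the subtree of `T` rooted at `c`. -/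
theorem relativized_ranking_satisfies_constraints
    {V : Type*} [Fintype V] (T : RTree V) (π : V → ℕ)
    (hbij : Set.BijOn π Set.univ (Set.Iio (Fintype.card V)))
    (hlevel : T.LevelConstraint π) (hprec : T.PrecedenceConstraint π)
    (c : V) (hc : c ∈ T.children T.root) :
    (T.subtree c).LevelConstraint
        (fun v => ({u ∈ insert c (T.desc c) | π u < π v.1} : Set V).ncard) ∧
    (T.subtree c).PrecedenceConstraint
        (fun v => ({u ∈ insert c (T.desc c) | π u < π v.1} : Set V).ncard) := by
  have hπ : Function.Injective π := Set.injOn_univ.mp hbij.injOn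
  constructor
  · intro p i hi j hj
    have hmem : ∀ w ∈ insert p ((T.subtree c).desc p), w.1 ∈ insert p.1 (T.desc p.1) := by
      intro w hw
      rcases Set.mem_insert_iff.mp hw with h | h
      · exact Set.mem_insert_iff.mpr (Or.inl (congrArg Subtype.val h))
      · exact Set.mem_insert_iff.mpr (Or.inr (T.desc_of_subtree_desc c p w h))
    have hT := hlevel p.1 i.1 (hmem i hi) j.1 (hmem j hj)
    have hcard : (T.desc p.1).ncard ≤ ((T.subtree c).desc p).ncard := by
      rw [← Set.ncard_image_of_injective _ Subtype.val_injective]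
      exact Set.ncard_le_ncard (T.desc_subset_image_subtree_desc π hprec c p) (Set.toFinite _)
    have h1 := RTree.ncard_rank_lt_le π hπ (insert c (T.desc c)) (π j.1) (π i.1)
    have h2 := RTree.ncard_rank_lt_le π hπ (insert c (T.desc c)) (π i.1) (π j.1)
    rw [abs_le] at hT ⊢
    constructor <;> dsimp only <;> omega
  · intro p i hi
    have hlt : π p.1 < π i.1 := hprec p.1 i.1 (T.desc_of_subtree_desc c p i hi)
    refine Set.ncard_lt_ncard ?_ (Set.toFinite _)
    -- `p` itself is counted by the rank of `i` but not by its own.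
    refine (Set.ssubset_iff_of_subset ?_).mpr ?_
    · exact fun u hu => ⟨hu.1, hu.2.trans hlt⟩
    · exact ⟨p.1, ⟨p.2, hlt⟩, fun h => lt_irrefl _ h.2⟩
end

section
/- Let T be a finite rooted tree with root r and let π : V → {0,1,…,|V|−1} be a bijection satisfying both the Level Constraint and the Precedence Constraint. Then the sets π(D(c) ∪ {c}), as c ranges over the children of r, are pairwise disjoint integer intervals whose union is {1, 2, …, |V|−1}; in particular, π is determined by π(r) = 0 followed by the relativized rankings of the subtrees rooted at the children of r, taken in the order of their starting positions. -/
namespace RTree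

variable {V : Type*}

/-- The subtree at `p` in terms of iterates alone; the iterate `n = 0` accounts for `p` itself. -/
theorem mem_subtree_iff (T : RTree V) (p v : V) :
    v ∈ insert p (T.desc p) ↔ ∃ n : ℕ, T.parent^[n] v = p := by
  constructor
  · rintro (rfl | h)
    · exact ⟨0, rfl⟩
    · exact h.2
  · intro h
    by_cases hv : v = p
    · exact Or.inl hv
    · exact Or.inr ⟨hv, h⟩

theorem iterate_root (T : RTree V) (n : ℕ) : T.parent^[n] T.root = T.root :=
  Function.iterate_fixed T.parent_root n

theorem exists_child (T : RTree V) {v : V} (hv : v ≠ T.root) :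
    ∃ c ∈ T.children T.root, v ∈ insert c (T.desc c) := by
  classical
  have hn := Nat.find_spec (T.reaches_root v)
  have hmin := fun m => Nat.find_min (T.reaches_root v) (m := m)
  generalize Nat.find (T.reaches_root v) = n at hn hmin
  cases n with
  | zero => exact absurd hn hv
  | succ k =>
    refine ⟨T.parent^[k] v, ⟨hmin k (Nat.lt_succ_self k), ?_⟩, (T.mem_subtree_iff _ _).2 ⟨k, rfl⟩⟩
    rwa [Function.iterate_succ_apply'] at hn

theorem root_notMem_subtree (T : RTree V) {c : V} (hc : c ∈ T.children T.root) :
    T.root ∉ insert c (T.desc c) := by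
  rw [mem_subtree_iff]
  rintro ⟨n, hn⟩
  exact hc.1 (hn.symm.trans (T.iterate_root n))

/-- A proper iterate of `parent` from a child of the root is the root, so no child of the root lies
strictly above another one on the path from `v`. -/
theorem child_unique (T : RTree V) {c c' v : V} (hc : c ∈ T.children T.root)
    (hc' : c' ∈ T.children T.root) (hv : v ∈ insert c (T.desc c))
    (hv' : v ∈ insert c' (T.desc c')) : c = c' := by
  rw [mem_subtree_iff] at hv hv'
  obtain ⟨n, hn⟩ := hv
  obtain ⟨m, hm⟩ := hv'
  wlog hle : n ≤ m generalizing c c' n m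
  · exact (this hc' hc m hm n hn (Nat.le_of_not_le hle)).symm
  obtain ⟨k, rfl⟩ := Nat.exists_eq_add_of_le' hle
  rw [Function.iterate_add_apply, hn] at hm
  cases k with
  | zero => exact hm
  | succ k =>
    rw [Function.iterate_succ_apply, hc.2, iterate_root] at hm
    exact absurd hm.symm hc'.1

theorem image_subtree_eq_Icc [Finite V] (T : RTree V) {π : V → ℕ} (hinj : Function.Injective π)
    (hlevel : T.LevelConstraint π) (hprec : T.PrecedenceConstraint π) (p : V) :
    π '' insert p (T.desc p) = Set.Icc (π p) (π p + (T.desc p).ncard) := by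
  apply Set.eq_of_subset_of_ncard_le
  · rintro _ ⟨v, hv, rfl⟩
    have hle : π p ≤ π v := by
      rcases hv with rfl | hd
      · exact le_rfl
      · exact (hprec p v hd).le
    have h := (abs_le.1 (hlevel p v hv p (Set.mem_insert _ _))).2
    exact ⟨hle, by omega⟩
  · have hp : p ∉ T.desc p := fun h => h.1 rfl
    rw [Set.ncard_image_of_injective _ hinj, Set.ncard_insert_of_notMem hp (Set.toFinite _),
      ← Finset.coe_Icc, Set.ncard_coe_finset, Nat.card_Icc]
    omega
  · exact Set.finite_Icc _ _

end RTree

/-- For a bijection `π : V → {0, …, |V|−1}` satisfying the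
Level and Precedence Constraints, the images `π(D(c) ∪ {c})`, as `c` ranges
over the children of the root, are pairwise disjoint integer intervals whose
union is `{1, 2, …, |V|−1}`; in particular the root is placed first,
`π(r) = 0`. -/
theorem child_blocks_partition_into_intervals
    {V : Type*} [Fintype V] (T : RTree V) (π : V → ℕ)
    (hbij : Set.BijOn π Set.univ (Set.Iio (Fintype.card V)))
    (hlevel : T.LevelConstraint π) (hprec : T.PrecedenceConstraint π) :
    π T.root = 0 ∧
    ((T.children T.root).Pairwise fun c c' =>
        Disjoint (π '' insert c (T.desc c)) (π '' insert c' (T.desc c'))) ∧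
    (∀ c ∈ T.children T.root, ∃ a b : ℕ, π '' insert c (T.desc c) = Set.Icc a b) ∧
    (⋃ c ∈ T.children T.root, π '' insert c (T.desc c))
        = Set.Icc 1 (Fintype.card V - 1) := by
  have hinj : Function.Injective π := Set.injOn_univ.1 hbij.injOn
  have hpos : 0 < Fintype.card V := Fintype.card_pos_iff.2 ⟨T.root⟩
  have hroot : π T.root = 0 := by
    obtain ⟨v, -, hv⟩ := hbij.surjOn (Set.mem_Iio.2 hpos)
    by_cases h : v = T.root
    · rwa [h] at hv
    · have := hprec T.root v ⟨h, T.reaches_root v⟩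
      omega
  refine ⟨hroot, ?_, ?_, ?_⟩
  · intro c hc c' hc' hne
    rw [Set.disjoint_image_iff hinj, Set.disjoint_left]
    exact fun v hv hv' => hne (T.child_unique hc hc' hv hv')
  · exact fun c _ => ⟨_, _, T.image_subtree_eq_Icc hinj hlevel hprec c⟩
  · ext k
    simp only [Set.mem_iUnion, Set.mem_Icc, exists_prop]
    constructor
    · rintro ⟨c, hc, v, hv, rfl⟩
      have hlt : π v < Fintype.card V := hbij.mapsTo (Set.mem_univ v)
      have hne : π v ≠ 0 := by
        intro h0
        rw [← hroot] at h0
        exact T.root_notMem_subtree hc (hinj h0 ▸ hv)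
      omega
    · rintro ⟨h1, h2⟩
      obtain ⟨v, -, rfl⟩ := hbij.surjOn (Set.mem_Iio.2 (show k < Fintype.card V by omega))
      have hv : v ≠ T.root := by
        rintro rfl
        omega
      obtain ⟨c, hc, hvc⟩ := T.exists_child hv
      exact ⟨c, hc, v, hvc, rfl⟩
end

section
/- Let T be a finite rooted tree with root r and let π : V → {0,1,…,|V|−1} be a bijection satisfying both the Level Constraint and the Precedence Constraint. Then for every k with 0 ≤ k < |V|, the prefix S_k = {v ∈ V : π(v) ≤ k} intersects the vertex sets of the subtrees rooted at the children of r in a special way: for at most one child c of r does S_k contain some but not all of D(c) ∪ {c}; for every other child c′ of r, the set D(c′) ∪ {c′} is either entirely contained in S_k or disjoint from S_k. -/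
namespace RTree

lemma exists_iterate_of_mem_block {V : Type*} {T : RTree V} {c u : V}
    (h : u ∈ insert c (T.desc c)) : ∃ n : ℕ, T.parent^[n] u = c := by
  rcases h with rfl | h
  · exact ⟨0, rfl⟩
  · exact h.2

lemma iterate_parent_root {V : Type*} (T : RTree V) (n : ℕ) :
    T.parent^[n] T.root = T.root :=
  Function.iterate_fixed T.parent_root n

/-- Blocks of distinct children of the root are disjoint, in asymmetric form: going further up from
a child of the root never leads to another one. -/
lemma eq_of_iterate_le {V : Type*} {T : RTree V} {c c' u : V}
    (hc : c ∈ T.children T.root) (hc' : c' ∈ T.children T.root) {n m : ℕ} (hnm : n ≤ m)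
    (hn : T.parent^[n] u = c) (hm : T.parent^[m] u = c') : c = c' := by
  obtain ⟨d, rfl⟩ := Nat.exists_eq_add_of_le' hnm
  rw [Function.iterate_add_apply, hn] at hm
  cases d with
  | zero => exact hm
  | succ d =>
    rw [Function.iterate_succ_apply, hc.2, iterate_parent_root] at hm
    exact absurd hm.symm hc'.1

/-- The image of a block under `π` is a full interval of integers, by counting. -/
lemma image_block {V : Type*} [Fintype V] {T : RTree V} {π : V → ℕ}
    (hinj : Function.Injective π) (hlevel : T.LevelConstraint π)
    (hprec : T.PrecedenceConstraint π) (c : V) :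
    π '' insert c (T.desc c) = Set.Icc (π c) (π c + (T.desc c).ncard) := by
  apply Set.eq_of_subset_of_ncard_le
  · rintro _ ⟨v, hv, rfl⟩
    have h1 := hlevel c v hv c (Set.mem_insert _ _)
    have h2 : π c ≤ π v := by
      rcases hv with rfl | hv
      · exact le_rfl
      · exact (hprec c v hv).le
    rw [abs_le] at h1
    exact ⟨h2, by omega⟩
  · rw [Set.ncard_image_of_injective _ hinj,
      Set.ncard_insert_of_notMem (fun h => h.1 rfl) (Set.toFinite _),
      ← Finset.coe_Icc, Set.ncard_coe_finset, Nat.card_Icc]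
    omega
  · exact Set.finite_Icc _ _

/-- A block cut by the prefix `S_k` contains the vertex numbered `k`. -/
lemma exists_mem_block_eq {V : Type*} [Fintype V] {T : RTree V} {π : V → ℕ}
    (hinj : Function.Injective π) (hlevel : T.LevelConstraint π)
    (hprec : T.PrecedenceConstraint π) {c : V} {k : ℕ}
    (h1 : ({u : V | π u ≤ k} ∩ insert c (T.desc c)).Nonempty)
    (h2 : ¬ insert c (T.desc c) ⊆ {u : V | π u ≤ k}) :
    ∃ u ∈ insert c (T.desc c), π u = k := by
  have him := image_block hinj hlevel hprec c
  obtain ⟨v, hvk, hv⟩ := h1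
  obtain ⟨w, hw, hwk⟩ := Set.not_subset.1 h2
  have hv' := him ▸ Set.mem_image_of_mem π hv
  have hw' := him ▸ Set.mem_image_of_mem π hw
  simp only [Set.mem_ofPred_eq, Set.mem_Icc] at *
  have hk : k ∈ π '' insert c (T.desc c) := by
    rw [him]
    exact ⟨by omega, by omega⟩
  exact hk

end RTree

/-- For a bijection `π : V → {0, …, |V|−1}` satisfying the
Level and Precedence Constraints, and any prefix `S_k = {v : π(v) ≤ k}` with
`0 ≤ k < |V|`: at most one child `c` of the root is such that `S_k` contains
some but not all of `D(c) ∪ {c}`; for every other child `c'`, the set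
`D(c') ∪ {c'}` is either entirely contained in `S_k` or disjoint from `S_k`. -/
theorem prefix_meets_at_most_one_child_block_partially
    {V : Type*} [Fintype V] (T : RTree V) (π : V → ℕ)
    (hbij : Set.BijOn π Set.univ (Set.Iio (Fintype.card V)))
    (hlevel : T.LevelConstraint π) (hprec : T.PrecedenceConstraint π) :
    ∀ k : ℕ, k < Fintype.card V →
      ({c ∈ T.children T.root |
          ({u : V | π u ≤ k} ∩ insert c (T.desc c)).Nonempty ∧
          ¬ insert c (T.desc c) ⊆ {u : V | π u ≤ k}} : Set V).Subsingleton ∧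
      ∀ c ∈ T.children T.root,
        ¬ (({u : V | π u ≤ k} ∩ insert c (T.desc c)).Nonempty ∧
            ¬ insert c (T.desc c) ⊆ {u : V | π u ≤ k}) →
          insert c (T.desc c) ⊆ {u : V | π u ≤ k} ∨
          Disjoint (insert c (T.desc c)) {u : V | π u ≤ k} := by
  intro k _
  have hinj : Function.Injective π := Set.injOn_univ.1 hbij.injOn
  constructor
  · rintro c ⟨hc, h1, h2⟩ c' ⟨hc', h1', h2'⟩
    obtain ⟨u, hu, huk⟩ := RTree.exists_mem_block_eq hinj hlevel hprec h1 h2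
    obtain ⟨u', hu', huk'⟩ := RTree.exists_mem_block_eq hinj hlevel hprec h1' h2'
    obtain rfl : u = u' := hinj (huk.trans huk'.symm)
    obtain ⟨n, hn⟩ := RTree.exists_iterate_of_mem_block hu
    obtain ⟨m, hm⟩ := RTree.exists_iterate_of_mem_block hu'
    rcases le_total n m with h | h
    · exact RTree.eq_of_iterate_le hc hc' h hn hm
    · exact (RTree.eq_of_iterate_le hc' hc h hm hn).symm
  · intro c _ h
    by_cases hs : insert c (T.desc c) ⊆ {u : V | π u ≤ k}
    · exact Or.inl hs
    · refine Or.inr (Set.disjoint_left.2 fun v hv hvk => h ⟨⟨v, hvk, hv⟩, hs⟩)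
end
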